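/- Let p = 2. Under the null hypothesis of uniformity, i.e., under P_0^{(n)} = U_2^{⊗n} on (S^1)^n, each of the test statistics T_+^{(n)}(x) := √n (2 λ̂_{n1}(x) − 1), T_−^{(n)}(x) := −√n (2 λ̂_{n2}(x) − 1), and T_±^{(n)}(x) := max( |2 λ̂_{n1}(x) − 1|, |2 λ̂_{n2}(x) − 1| ) · √n converges in distribution, as n → ∞, to the probability distribution on ℝ with cumulative distribution function ℓ ↦ (1 − exp(−ℓ²)) · 1[ℓ > 0]. -/

import Mathlib

open MeasureTheory ProbabilityTheory Filter Matrix Real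
open scoped ENNReal NNReal Topology

noncomputable section

/-- The sample covariance matrix `S_n(x) = (1/n) Σ_i x_i x_i'`. -/
def Sn (p n : ℕ) (x : Fin n → (Fin p → ℝ)) : Matrix (Fin p) (Fin p) ℝ :=
  Matrix.of fun a b => (1 / (n:ℝ)) * ∑ i, x i a * x i b

/-- Largest eigenvalue of a (symmetric) real matrix, via the Rayleigh quotient. -/
def maxEig {p : ℕ} (A : Matrix (Fin p) (Fin p) ℝ) : ℝ :=
  sSup {r | ∃ v : Fin p → ℝ, (∑ i, v i ^ 2) = 1 ∧ r = v ⬝ᵥ A.mulVec v}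

/-- Smallest eigenvalue of a (symmetric) real matrix, via the Rayleigh quotient. -/
def minEig {p : ℕ} (A : Matrix (Fin p) (Fin p) ℝ) : ℝ :=
  sInf {r | ∃ v : Fin p → ℝ, (∑ i, v i ^ 2) = 1 ∧ r = v ⬝ᵥ A.mulVec v}

/-!
Identify the plane with `ℂ`. For a sample `zᵢ` on the unit circle, the quadratic form of `Sₙ` at a
unit vector `v` is `(1 + ⟪v², n⁻¹ ∑ zᵢ²⟫) / 2`, and `v²` runs over the whole circle, so
`2 λ̂ - 1 = ±|n⁻¹ ∑ zᵢ²|` for the two eigenvalues and all three statistics equal `|n^{-1/2} ∑ zᵢ²|`.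
A rotation-invariant `z` has `E z² = E z⁴ = 0`, which makes `√2 z²` centred with identity
covariance. By the central limit theorem in the plane, `√2 n^{-1/2} ∑ zᵢ²` converges to a standard
Gaussian vector, whose norm has distribution function `1 - exp (-r² / 2)`; take `r = √2 ℓ`.
-/

section StandardGaussian

variable {E : Type*} [NormedAddCommGroup E] [InnerProductSpace ℝ E]

/-- The density `(2π)^(-d/2) exp(-‖x‖²/2)` of the standard Gaussian measure `stdGaussian E` on a
Euclidean space `E` of dimension `d`, with respect to the Lebesgue measure. -/
def stdGaussianPDFReal (x : E) : ℝ :=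
  (2 * π) ^ (-(Module.finrank ℝ E / 2 : ℝ)) * exp (-‖x‖ ^ 2 / 2)

lemma stdGaussianPDFReal_nonneg (x : E) : 0 ≤ stdGaussianPDFReal x := by
  unfold stdGaussianPDFReal; positivity

@[fun_prop]
lemma continuous_stdGaussianPDFReal : Continuous (stdGaussianPDFReal (E := E)) := by
  unfold stdGaussianPDFReal; fun_prop

variable [FiniteDimensional ℝ E] [MeasurableSpace E] [BorelSpace E]

lemma integrable_stdGaussianPDFReal : Integrable (stdGaussianPDFReal (E := E)) := by
  refine Integrable.const_mul ?_ _
  have integrable_norm := (GaussianFourier.integrable_cexp_neg_mul_sq_norm_add (V := E) (b := 1 / 2)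
    (by simp) 0 0).norm
  refine integrable_norm.congr (ae_of_all _ fun x => ?_)
  simp [Complex.norm_exp, ← Complex.ofReal_pow, div_eq_inv_mul]

lemma charFun_withDensity_stdGaussianPDFReal (t : E) :
    charFun (volume.withDensity fun x : E => ENNReal.ofReal (stdGaussianPDFReal x)) t =
      Complex.exp (-‖t‖ ^ 2 / 2) := by
  set d := Module.finrank ℝ E with hd
  have two_pi_pos : (0 : ℝ) < 2 * π := by positivity
  have integrand (x : E) : (ENNReal.ofReal (stdGaussianPDFReal x)).toReal •
      Complex.exp (inner ℝ x t * Complex.I) = ((2 * π) ^ (-(d / 2 : ℝ)) : ℝ) *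
        Complex.exp (-(1 / 2) * (‖x‖ : ℂ) ^ 2 + Complex.I * (inner ℝ t x : ℝ)) := by
    rw [ENNReal.toReal_ofReal (stdGaussianPDFReal_nonneg x), Complex.real_smul,
      stdGaussianPDFReal, ← hd, Complex.exp_add, real_inner_comm]
    push_cast
    ring_nf
  have normalization : (((2 * π) ^ (-(d / 2 : ℝ)) : ℝ) : ℂ) * (π / (1 / 2)) ^ (d / 2 : ℂ) = 1 := by
    have base : (π / (1 / 2) : ℂ) = ((2 * π : ℝ) : ℂ) := by push_cast; ring
    have exponent : (d / 2 : ℂ) = ((d / 2 : ℝ) : ℂ) := by push_cast; rfl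
    rw [base, exponent, ← Complex.ofReal_cpow two_pi_pos.le, ← Complex.ofReal_mul,
      ← Real.rpow_add two_pi_pos, neg_add_cancel, Real.rpow_zero, Complex.ofReal_one]
  rw [charFun_apply, integral_withDensity_eq_integral_toReal_smul (by fun_prop)
    (ae_of_all _ fun x => ENNReal.ofReal_lt_top)]
  simp_rw [integrand]
  rw [integral_const_mul, GaussianFourier.integral_cexp_neg_mul_sq_norm_add (by simp), ← mul_assoc,
    normalization, one_mul, Complex.I_sq]
  ring_nf

lemma stdGaussian_eq_withDensity :
    stdGaussian E = volume.withDensity fun x => ENNReal.ofReal (stdGaussianPDFReal x) := by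
  have := isFiniteMeasure_withDensity_ofReal (integrable_stdGaussianPDFReal (E := E)).2
  refine Measure.ext_of_charFun (funext fun t => ?_)
  rw [charFun_stdGaussian, charFun_withDensity_stdGaussianPDFReal]

lemma stdGaussian_frontier_of_convex {s : Set E} (hs : Convex ℝ s) :
    stdGaussian E (frontier s) = 0 := by
  rw [stdGaussian_eq_withDensity]
  exact withDensity_absolutelyContinuous _ _ (hs.addHaar_frontier volume)

lemma stdGaussian_real_eq_setIntegral {s : Set E} (hs : MeasurableSet s) :
    (stdGaussian E).real s = ∫ x in s, stdGaussianPDFReal x := by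
  rw [measureReal_def, stdGaussian_eq_withDensity, withDensity_apply _ hs,
    integral_eq_lintegral_of_nonneg_ae (ae_of_all _ stdGaussianPDFReal_nonneg)
      continuous_stdGaussianPDFReal.aestronglyMeasurable]

lemma setIntegral_closedBall_fun_norm {F : Type*} [NormedAddCommGroup F] [NormedSpace ℝ F]
    [Nontrivial E] (f : ℝ → F) (r : ℝ) :
    ∫ x in Metric.closedBall (0 : E) r, f ‖x‖ =
      Module.finrank ℝ E • volume.real (Metric.ball (0 : E) 1) •
        ∫ y in Set.Ioc 0 r, y ^ (Module.finrank ℝ E - 1) • f y := by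
  have indicator_norm (x : E) : (Metric.closedBall (0 : E) r).indicator (fun x => f ‖x‖) x =
      (Set.Iic r).indicator f ‖x‖ := by
    by_cases hx : ‖x‖ ≤ r <;> simp [hx]
  have indicator_smul (y : ℝ) : y ^ (Module.finrank ℝ E - 1) • (Set.Iic r).indicator f y =
      (Set.Iic r).indicator (fun y => y ^ (Module.finrank ℝ E - 1) • f y) y :=
    (Set.indicator_smul_apply _ (fun y => y ^ (Module.finrank ℝ E - 1)) f y).symm
  rw [← integral_indicator Metric.isClosed_closedBall.measurableSet]
  simp_rw [indicator_norm]
  rw [integral_fun_norm_addHaar]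
  simp_rw [indicator_smul]
  rw [setIntegral_indicator measurableSet_Iic, Set.Ioi_inter_Iic]

lemma integral_mul_exp_neg_sq_div_two {r : ℝ} (hr : 0 ≤ r) :
    ∫ y in Set.Ioc 0 r, y * exp (-y ^ 2 / 2) = 1 - exp (-r ^ 2 / 2) := by
  have hasDerivAt_primitive (y : ℝ) :
      HasDerivAt (fun y => -exp (-y ^ 2 / 2)) (y * exp (-y ^ 2 / 2)) y := by
    have exponent : HasDerivAt (fun y : ℝ => -y ^ 2 / 2) (-y) y := by
      simpa [neg_div] using! (hasDerivAt_pow 2 y).neg.div_const 2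
    simpa [mul_comm] using! exponent.exp.neg
  rw [← intervalIntegral.integral_of_le hr, intervalIntegral.integral_eq_sub_of_hasDerivAt
    (fun y _ => hasDerivAt_primitive y) (Continuous.intervalIntegrable (by fun_prop) _ _)]
  simp [neg_add_eq_sub]

lemma stdGaussian_real_closedBall_of_finrank_eq_two (hE : Module.finrank ℝ E = 2) (r : ℝ) :
    (stdGaussian E).real (Metric.closedBall 0 r) =
      if 0 < r then 1 - exp (-r ^ 2 / 2) else 0 := by
  have : Nontrivial E := Module.nontrivial_of_finrank_pos (R := ℝ) (by omega)
  have volume_unit_ball : volume.real (Metric.ball (0 : E) 1) = π := by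
    rw [measureReal_def, InnerProductSpace.volume_ball_of_dim_even (k := 1) (by omega)]
    simp [pi_nonneg]
  have radial (y : ℝ) : y * ((2 * π) ^ (-1 : ℝ) * exp (-y ^ 2 / 2)) =
      (2 * π)⁻¹ * (y * exp (-y ^ 2 / 2)) := by
    rw [Real.rpow_neg_one]
    ring
  rw [stdGaussian_real_eq_setIntegral Metric.isClosed_closedBall.measurableSet]
  unfold stdGaussianPDFReal
  rw [setIntegral_closedBall_fun_norm
    (fun y => (2 * π) ^ (-(Module.finrank ℝ E / 2 : ℝ)) * exp (-y ^ 2 / 2)), volume_unit_ball, hE]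
  norm_num only [pow_one, smul_eq_mul, nsmul_eq_mul]
  simp_rw [radial]
  rw [integral_const_mul]
  split_ifs with hr
  · rw [integral_mul_exp_neg_sq_div_two hr.le]
    field_simp
  · simp [Set.Ioc_eq_empty hr]

end StandardGaussian

section CentralLimitTheorem

lemma tendsto_measureReal_preimage_of_tendstoInDistribution {ι E Ω' : Type*} {Ω : ι → Type*}
    [∀ i, MeasurableSpace (Ω i)] [MeasurableSpace Ω'] {P : (i : ι) → Measure (Ω i)}
    [∀ i, IsProbabilityMeasure (P i)] {P' : Measure Ω'} [IsProbabilityMeasure P']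
    [TopologicalSpace E] [HasOuterApproxClosed E] [MeasurableSpace E] [BorelSpace E]
    {X : (i : ι) → Ω i → E} {Z : Ω' → E} {l : Filter ι} (h : TendstoInDistribution X l Z P P')
    {s : Set E} (hs : MeasurableSet s) (hfrontier : P' (Z ⁻¹' frontier s) = 0) :
    Tendsto (fun i => (P i).real (X i ⁻¹' s)) l (𝓝 (P'.real (Z ⁻¹' s))) := by
  have null_frontier : P'.map Z (frontier s) = 0 := by
    rwa [Measure.map_apply_of_aemeasurable h.aemeasurable_limit isClosed_frontier.measurableSet]
  have convergence :=
    ProbabilityMeasure.tendsto_measure_of_null_frontier_of_tendsto' h.tendsto null_frontier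
  simp only [ProbabilityMeasure.coe_mk,
    Measure.map_apply_of_aemeasurable h.aemeasurable_limit hs,
    fun i => Measure.map_apply_of_aemeasurable (h.forall_aemeasurable i) hs] at convergence
  exact (ENNReal.tendsto_toReal (measure_ne_top _ _)).comp convergence

lemma identDistrib_comp_eval {ι Ω E : Type*} [Fintype ι] [MeasurableSpace Ω] [MeasurableSpace E]
    {P : Measure Ω} [IsProbabilityMeasure P] {X : Ω → E} (hX : AEMeasurable X P) (i : ι) :
    IdentDistrib (fun ω : ι → Ω => X (ω i)) X (Measure.pi fun _ => P) P :=
  have eval := measurePreserving_eval (fun _ : ι => P) i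
  have hX' : AEMeasurable X ((Measure.pi fun _ => P).map (Function.eval i)) := by rwa [eval.map_eq]
  { aemeasurable_fst := hX'.comp_aemeasurable eval.aemeasurable
    aemeasurable_snd := hX
    map_eq := by
      conv_rhs => rw [← eval.map_eq, AEMeasurable.map_map_of_aemeasurable hX' eval.aemeasurable]
      rfl }

variable {Ω E : Type*} [NormedAddCommGroup E]

/-- The normalised sum `n^{-1/2} (X(ω₁) + ⋯ + X(ωₙ))` of `n` copies of the random vector `X`;
the copies are independent when `ω` is drawn from the product of `n` copies of a measure on `Ω`. -/
def normalizedSum [NormedSpace ℝ E] (X : Ω → E) (n : ℕ) (ω : Fin n → Ω) : E :=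
  (√n)⁻¹ • ∑ i, X (ω i)

variable [MeasurableSpace Ω] [InnerProductSpace ℝ E] [MeasurableSpace E] [BorelSpace E]
  {P : Measure Ω} {X : Ω → E}

lemma charFun_map_smul_eq_charFun_map_inner (hX : AEMeasurable X P) (c : ℝ) (t : E) :
    charFun (P.map X) (c • t) = charFun (P.map fun ω => inner ℝ (X ω) t) c := by
  rw [charFun_apply, charFun_apply, integral_map hX (by fun_prop),
    integral_map (by fun_prop) (by fun_prop)]
  simp [real_inner_smul_right]

variable [FiniteDimensional ℝ E] [IsProbabilityMeasure P]

lemma aemeasurable_normalizedSum (hX : AEMeasurable X P) (n : ℕ) :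
    AEMeasurable (normalizedSum X n) (Measure.pi fun _ : Fin n => P) := by
  have (i : Fin n) := (identDistrib_comp_eval (P := P) hX i).aemeasurable_fst
  exact (Finset.aemeasurable_fun_sum _ fun i _ => this i).const_smul _

lemma charFun_map_normalizedSum (hX : AEMeasurable X P) (n : ℕ) (t : E) :
    charFun ((Measure.pi fun _ : Fin n => P).map (normalizedSum X n)) t =
      charFun (P.map X) ((√n)⁻¹ • t) ^ n := by
  have copy (i : Fin n) := identDistrib_comp_eval (P := P) hX i
  unfold normalizedSum
  rw [charFun_map_smul_comp (Finset.aemeasurable_fun_sum _ fun i _ => (copy i).aemeasurable_fst),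
    iIndepFun.charFun_map_fun_sum_eq_prod (fun i => (copy i).aemeasurable_fst)
      (iIndepFun_pi fun _ => hX)]
  simp [(copy _).map_eq]

theorem tendstoInDistribution_normalizedSum (hX : AEMeasurable X P)
    (hmean : ∀ u : E, ‖u‖ = 1 → ∫ ω, inner ℝ (X ω) u ∂P = 0)
    (hvar : ∀ u : E, ‖u‖ = 1 → ∫ ω, inner ℝ (X ω) u ^ 2 ∂P = 1) :
    TendstoInDistribution (normalizedSum X) atTop id (fun n => Measure.pi fun _ : Fin n => P)
      (stdGaussian E) where
  forall_aemeasurable := aemeasurable_normalizedSum hX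
  tendsto := by
    refine ProbabilityMeasure.tendsto_iff_tendsto_charFun.2 fun t => ?_
    simp only [ProbabilityMeasure.coe_mk, Measure.map_id, charFun_stdGaussian,
      charFun_map_normalizedSum hX]
    obtain rfl | ht := eq_or_ne t 0
    · have := Measure.isProbabilityMeasure_map hX
      simp
    have polar : t = ‖t‖ • (‖t‖⁻¹ • t) := by rw [smul_inv_smul₀ (norm_ne_zero_iff.2 ht)]
    have norm_direction : ‖‖t‖⁻¹ • t‖ = 1 := norm_smul_inv_norm (𝕜 := ℝ) ht
    have clt := tendsto_charFun_inv_sqrt_mul_pow (P := P) (X := fun ω => inner ℝ (X ω) (‖t‖⁻¹ • t))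
      (by fun_prop) (hmean _ norm_direction) (hvar _ norm_direction) ‖t‖
    refine clt.congr fun n => ?_
    rw [← charFun_map_smul_eq_charFun_map_inner hX, mul_smul, ← polar]

theorem tendsto_measure_norm_normalizedSum_le (hE : Module.finrank ℝ E = 2) (hX : AEMeasurable X P)
    (hmean : ∀ u : E, ‖u‖ = 1 → ∫ ω, inner ℝ (X ω) u ∂P = 0)
    (hvar : ∀ u : E, ‖u‖ = 1 → ∫ ω, inner ℝ (X ω) u ^ 2 ∂P = 1) (r : ℝ) :
    Tendsto (fun n => (Measure.pi fun _ : Fin n => P).real {ω | ‖normalizedSum X n ω‖ ≤ r}) atTop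
      (𝓝 (if 0 < r then 1 - exp (-r ^ 2 / 2) else 0)) := by
  rw [← stdGaussian_real_closedBall_of_finrank_eq_two hE]
  have convergence := tendsto_measureReal_preimage_of_tendstoInDistribution
    (tendstoInDistribution_normalizedSum hX hmean hvar) Metric.isClosed_closedBall.measurableSet
    (stdGaussian_frontier_of_convex (convex_closedBall (0 : E) r))
  rw [Set.preimage_id] at convergence
  simpa only [Set.preimage, mem_closedBall_zero_iff] using convergence

end CentralLimitTheorem

section PlanarQuadraticForms

/-- A planar vector seen as a complex number. -/
def planeToComplex (x : Fin 2 → ℝ) : ℂ := ⟨x 0, x 1⟩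

@[fun_prop]
lemma continuous_planeToComplex : Continuous planeToComplex := by
  have (x : Fin 2 → ℝ) : planeToComplex x = x 0 + x 1 * Complex.I :=
    Complex.mk_eq_add_mul_I _ _
  rw [funext this]
  fun_prop

lemma surjective_planeToComplex : Function.Surjective planeToComplex :=
  fun z => ⟨![z.re, z.im], rfl⟩

lemma norm_planeToComplex_sq (x : Fin 2 → ℝ) : ‖planeToComplex x‖ ^ 2 = ∑ a, x a ^ 2 := by
  rw [← Complex.normSq_eq_norm_sq, Complex.normSq_apply, Fin.sum_univ_two]
  simp only [planeToComplex]
  ring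

lemma exists_inner_planeToComplex_sq_eq_norm (w : ℂ) :
    ∃ v : Fin 2 → ℝ, ∑ i, v i ^ 2 = 1 ∧ inner ℝ (planeToComplex v ^ 2) w = ‖w‖ := by
  obtain ⟨direction, norm_direction, inner_direction⟩ : ∃ u : ℂ, ‖u‖ = 1 ∧ inner ℝ u w = ‖w‖ := by
    obtain rfl | hw := eq_or_ne w 0
    · exact ⟨1, norm_one, by simp⟩
    · refine ⟨‖w‖⁻¹ • w, norm_smul_inv_norm (𝕜 := ℝ) hw, ?_⟩
      rw [real_inner_smul_left, real_inner_self_eq_norm_sq]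
      field_simp
  obtain ⟨z, rfl⟩ := IsAlgClosed.exists_pow_nat_eq direction two_pos
  obtain ⟨v, rfl⟩ := surjective_planeToComplex z
  exact ⟨v, by rw [← norm_planeToComplex_sq, ← norm_pow, norm_direction], inner_direction⟩

/-- The traceless symmetric part of a planar matrix, encoded as the complex number `w` for which
the quadratic form is `v ↦ (tr A · |v|² + ⟪v², w⟫) / 2`, squares being taken in `ℂ`. -/
def deviator (A : Matrix (Fin 2) (Fin 2) ℝ) : ℂ := ⟨A 0 0 - A 1 1, A 0 1 + A 1 0⟩

lemma dotProduct_mulVec_eq_trace_add_inner_deviator (A : Matrix (Fin 2) (Fin 2) ℝ)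
    (v : Fin 2 → ℝ) :
    v ⬝ᵥ A *ᵥ v =
      (A.trace * ∑ i, v i ^ 2 + inner ℝ (planeToComplex v ^ 2) (deviator A)) / 2 := by
  simp only [dotProduct, mulVec, trace, diag_apply, Fin.sum_univ_two, Complex.inner,
    planeToComplex, deviator, pow_two, map_mul, Complex.mul_re, Complex.mul_im, Complex.conj_re,
    Complex.conj_im]
  ring

lemma maxEig_eq_trace_add_norm_deviator (A : Matrix (Fin 2) (Fin 2) ℝ) :
    maxEig A = (A.trace + ‖deviator A‖) / 2 := by
  refine IsGreatest.csSup_eq ⟨?_, ?_⟩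
  · obtain ⟨v, hv, inner_eq⟩ := exists_inner_planeToComplex_sq_eq_norm (deviator A)
    exact ⟨v, hv, by rw [dotProduct_mulVec_eq_trace_add_inner_deviator, hv, inner_eq, mul_one]⟩
  · rintro _ ⟨v, hv, rfl⟩
    have cauchy_schwarz := real_inner_le_norm (planeToComplex v ^ 2) (deviator A)
    rw [norm_pow, norm_planeToComplex_sq, hv, one_mul] at cauchy_schwarz
    rw [dotProduct_mulVec_eq_trace_add_inner_deviator, hv]
    linarith

lemma minEig_eq_neg_maxEig_neg {p : ℕ} (A : Matrix (Fin p) (Fin p) ℝ) :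
    minEig A = -maxEig (-A) := by
  rw [minEig, maxEig, Real.sInf_def]
  congr 2
  ext r
  simp [neg_mulVec, neg_eq_iff_eq_neg]

lemma minEig_eq_trace_sub_norm_deviator (A : Matrix (Fin 2) (Fin 2) ℝ) :
    minEig A = (A.trace - ‖deviator A‖) / 2 := by
  have deviator_neg : deviator (-A) = -deviator A := by
    apply Complex.ext <;>
      simp only [deviator, Matrix.neg_apply, Complex.neg_re, Complex.neg_im] <;>
      ring
  rw [minEig_eq_neg_maxEig_neg, maxEig_eq_trace_add_norm_deviator, deviator_neg, norm_neg,
    trace_neg]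
  ring

end PlanarQuadraticForms

section SampleCovariance

lemma trace_Sn (p n : ℕ) (x : Fin n → Fin p → ℝ) :
    (Sn p n x).trace = (n : ℝ)⁻¹ * ∑ i, ∑ a, x i a ^ 2 := by
  simp only [trace, diag_apply, Sn, of_apply, one_div, ← Finset.mul_sum, pow_two]
  rw [Finset.sum_comm]

lemma deviator_Sn (n : ℕ) (x : Fin n → Fin 2 → ℝ) :
    deviator (Sn 2 n x) = (n : ℝ)⁻¹ • ∑ i, planeToComplex (x i) ^ 2 := by
  apply Complex.ext
  · simp [deviator, Sn, planeToComplex, pow_two, mul_sub]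
  · simp [deviator, Sn, planeToComplex, pow_two, Finset.sum_add_distrib, mul_add]

lemma trace_Sn_eq_one {p n : ℕ} (hn : n ≠ 0) {x : Fin n → Fin p → ℝ}
    (hx : ∀ i, ∑ a, x i a ^ 2 = 1) : (Sn p n x).trace = 1 := by
  simp [trace_Sn, hx, hn]

lemma sqrt_mul_norm_deviator_Sn (n : ℕ) (x : Fin n → Fin 2 → ℝ) :
    √n * ‖deviator (Sn 2 n x)‖ = ‖normalizedSum (fun y => planeToComplex y ^ 2) n x‖ := by
  rw [deviator_Sn, normalizedSum, norm_smul, norm_smul, ← mul_assoc, norm_inv, norm_inv,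
    Real.norm_of_nonneg (Real.sqrt_nonneg _), Real.norm_of_nonneg (Nat.cast_nonneg n),
    ← div_eq_mul_inv, Real.sqrt_div_self]

end SampleCovariance

section UnimodularVariables

lemma two_mul_inner_sq (w u : ℂ) :
    2 * inner ℝ w u ^ 2 = (‖w‖ * ‖u‖) ^ 2 + inner ℝ (w ^ 2) (u ^ 2) := by
  rw [mul_pow, ← Complex.normSq_eq_norm_sq, ← Complex.normSq_eq_norm_sq, Complex.normSq_apply,
    Complex.normSq_apply]
  simp only [Complex.inner, pow_two, map_mul, Complex.mul_re, Complex.mul_im, Complex.conj_re,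
    Complex.conj_im]
  ring

variable {Ω : Type*} [MeasurableSpace Ω] {P : Measure Ω} [IsProbabilityMeasure P] {W : Ω → ℂ}

lemma integral_two_mul_inner_sq_of_norm_eq_one (hW : AEMeasurable W P)
    (hnorm : ∀ᵐ ω ∂P, ‖W ω‖ = 1) (hmoment : ∫ ω, W ω ^ 2 ∂P = 0) {u : ℂ} (hu : ‖u‖ = 1) :
    ∫ ω, 2 * inner ℝ (W ω) u ^ 2 ∂P = 1 := by
  have integrable_sq : Integrable (fun ω => W ω ^ 2) P := by
    refine Integrable.of_bound (by fun_prop) 1 (hnorm.mono fun ω hω => ?_)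
    rw [norm_pow, hω, one_pow]
  have double_angle : ∀ᵐ ω ∂P, 2 * inner ℝ (W ω) u ^ 2 = 1 + inner ℝ (u ^ 2) (W ω ^ 2) := by
    filter_upwards [hnorm] with ω hω
    rw [two_mul_inner_sq, hω, hu, real_inner_comm, one_mul, one_pow]
  rw [integral_congr_ae double_angle, integral_add (integrable_const 1)
    (integrable_sq.const_inner _), integral_inner integrable_sq, hmoment]
  simp

theorem tendsto_measure_norm_normalizedSum_le_of_norm_eq_one (hW : AEMeasurable W P)
    (hnorm : ∀ᵐ ω ∂P, ‖W ω‖ = 1) (hmean : ∫ ω, W ω ∂P = 0) (hmoment : ∫ ω, W ω ^ 2 ∂P = 0)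
    (ℓ : ℝ) :
    Tendsto (fun n => (Measure.pi fun _ : Fin n => P).real {ω | ‖normalizedSum W n ω‖ ≤ ℓ}) atTop
      (𝓝 (if 0 < ℓ then 1 - exp (-ℓ ^ 2) else 0)) := by
  have integrable_W : Integrable W P :=
    Integrable.of_bound hW.aestronglyMeasurable 1 (hnorm.mono fun _ hω => hω.le)
  have sqrt_two_pos : 0 < √(2 : ℝ) := by positivity
  have mean (u : ℂ) : ∫ ω, inner ℝ (√2 • W ω) u ∂P = 0 := by
    simp_rw [real_inner_comm u, real_inner_smul_right]
    rw [integral_const_mul, integral_inner integrable_W, hmean, inner_zero_right, mul_zero]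
  have variance (u : ℂ) (hu : ‖u‖ = 1) : ∫ ω, inner ℝ (√2 • W ω) u ^ 2 ∂P = 1 := by
    simp_rw [real_inner_smul_left, mul_pow, Real.sq_sqrt zero_le_two]
    exact integral_two_mul_inner_sq_of_norm_eq_one hW hnorm hmoment hu
  have norm_rescaled (n : ℕ) (ω : Fin n → Ω) :
      ‖normalizedSum (fun ω => √2 • W ω) n ω‖ = √2 * ‖normalizedSum W n ω‖ := by
    rw [normalizedSum, ← Finset.smul_sum, smul_comm, norm_smul, Real.norm_of_nonneg sqrt_two_pos.le,
      normalizedSum]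
  have clt := tendsto_measure_norm_normalizedSum_le Complex.finrank_real_complex
    (hW.const_smul √2) (fun u _ => mean u) variance (√2 * ℓ)
  have exponent : -(√2 * ℓ) ^ 2 / 2 = -ℓ ^ 2 := by
    rw [mul_pow, Real.sq_sqrt zero_le_two]
    ring
  simpa only [Pi.smul_def, norm_rescaled, mul_le_mul_iff_right₀ sqrt_two_pos,
    mul_pos_iff_of_pos_left sqrt_two_pos, exponent] using clt

end UnimodularVariables

section ExtremeEigenvalues

lemma tendsto_measure_le_of_eq_sqrt_mul_norm_deviator {U : Measure (Fin 2 → ℝ)}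
    [IsProbabilityMeasure U] (hUsphere : ∀ᵐ y ∂U, ∑ a, y a ^ 2 = 1)
    (hmoment₂ : ∫ y, planeToComplex y ^ 2 ∂U = 0) (hmoment₄ : ∫ y, planeToComplex y ^ 4 ∂U = 0)
    {T : (n : ℕ) → (Fin n → Fin 2 → ℝ) → ℝ}
    (hT : ∀ n x, n ≠ 0 → (∀ i, ∑ a, x i a ^ 2 = 1) → T n x = √n * ‖deviator (Sn 2 n x)‖) (ℓ : ℝ) :
    Tendsto (fun n => (Measure.pi fun _ : Fin n => U).real {x | T n x ≤ ℓ}) atTop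
      (𝓝 (if 0 < ℓ then 1 - exp (-ℓ ^ 2) else 0)) := by
  have norm_sq : ∀ᵐ y ∂U, ‖planeToComplex y ^ 2‖ = 1 := by
    filter_upwards [hUsphere] with y hy
    rw [norm_pow, norm_planeToComplex_sq, hy]
  have limit := tendsto_measure_norm_normalizedSum_le_of_norm_eq_one (by fun_prop) norm_sq hmoment₂
    (by simpa only [← pow_mul] using hmoment₄) ℓ
  refine limit.congr' ((eventually_ne_atTop 0).mono fun n hn => ?_)
  have sample : ∀ᵐ x ∂Measure.pi fun _ : Fin n => U, ∀ i, ∑ a, x i a ^ 2 = 1 :=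
    ae_all_iff.2 fun i =>
      (Measure.tendsto_eval_ae_ae (μ := fun _ => U) (i := i)).eventually hUsphere
  refine measureReal_congr (eventuallyEq_set.2 ?_)
  filter_upwards [sample] with x hx
  rw [hT n x hn hx, sqrt_mul_norm_deviator_Sn]

lemma two_mul_maxEig_Sn_sub_one {n : ℕ} (hn : n ≠ 0) {x : Fin n → Fin 2 → ℝ}
    (hx : ∀ i, ∑ a, x i a ^ 2 = 1) : 2 * maxEig (Sn 2 n x) - 1 = ‖deviator (Sn 2 n x)‖ := by
  rw [maxEig_eq_trace_add_norm_deviator, trace_Sn_eq_one hn hx]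
  ring

lemma two_mul_minEig_Sn_sub_one {n : ℕ} (hn : n ≠ 0) {x : Fin n → Fin 2 → ℝ}
    (hx : ∀ i, ∑ a, x i a ^ 2 = 1) : 2 * minEig (Sn 2 n x) - 1 = -‖deviator (Sn 2 n x)‖ := by
  rw [minEig_eq_trace_sub_norm_deviator, trace_Sn_eq_one hn hx]
  ring

theorem circle_extreme_eigenvalue_statistics_null_limit_general
    (U : Measure (Fin 2 → ℝ)) [IsProbabilityMeasure U]
    (hUsphere : U {x : Fin 2 → ℝ | ∑ a, x a ^ 2 = 1}ᶜ = 0)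
    (hmoment₂ : ∫ y, planeToComplex y ^ 2 ∂U = 0) (hmoment₄ : ∫ y, planeToComplex y ^ 4 ∂U = 0) :
    (∀ ℓ : ℝ,
      Tendsto (fun n => ((Measure.pi (fun _ : Fin n => U))
          {x | Real.sqrt n * (2 * maxEig (Sn 2 n x) - 1) ≤ ℓ}).toReal) atTop
        (𝓝 (if 0 < ℓ then 1 - Real.exp (-ℓ ^ 2) else 0))) ∧
    (∀ ℓ : ℝ,
      Tendsto (fun n => ((Measure.pi (fun _ : Fin n => U))
          {x | -(Real.sqrt n * (2 * minEig (Sn 2 n x) - 1)) ≤ ℓ}).toReal) atTop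
        (𝓝 (if 0 < ℓ then 1 - Real.exp (-ℓ ^ 2) else 0))) ∧
    (∀ ℓ : ℝ,
      Tendsto (fun n => ((Measure.pi (fun _ : Fin n => U))
          {x | Real.sqrt n * max |2 * maxEig (Sn 2 n x) - 1| |2 * minEig (Sn 2 n x) - 1| ≤
            ℓ}).toReal) atTop (𝓝 (if 0 < ℓ then 1 - Real.exp (-ℓ ^ 2) else 0))) := by
  refine ⟨?_, ?_, ?_⟩ <;>
    refine tendsto_measure_le_of_eq_sqrt_mul_norm_deviator hUsphere hmoment₂ hmoment₄
      fun n x hn hx => ?_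
  · rw [two_mul_maxEig_Sn_sub_one hn hx]
  · rw [two_mul_minEig_Sn_sub_one hn hx, mul_neg, neg_neg]
  · rw [two_mul_maxEig_Sn_sub_one hn hx, two_mul_minEig_Sn_sub_one hn hx, abs_neg, max_self,
      abs_norm]

end ExtremeEigenvalues

section RotationInvariance

/-- The matrix of multiplication by `ζ` on `ℂ`, in the coordinates of `planeToComplex`. -/
def complexMulMatrix (ζ : ℂ) : Matrix (Fin 2) (Fin 2) ℝ := !![ζ.re, -ζ.im; ζ.im, ζ.re]

lemma complexMulMatrix_mul_transpose {ζ : ℂ} (hζ : ‖ζ‖ = 1) :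
    complexMulMatrix ζ * (complexMulMatrix ζ)ᵀ = 1 := by
  have sum_sq : ζ.re * ζ.re + ζ.im * ζ.im = 1 := by
    rw [← Complex.normSq_apply, Complex.normSq_eq_norm_sq, hζ, one_pow]
  ext i j
  fin_cases i <;> fin_cases j <;> simp [complexMulMatrix, mul_apply, Fin.sum_univ_two] <;> linarith

lemma planeToComplex_complexMulMatrix_mulVec (ζ : ℂ) (x : Fin 2 → ℝ) :
    planeToComplex (complexMulMatrix ζ *ᵥ x) = ζ * planeToComplex x := by
  apply Complex.ext <;>
    simp [planeToComplex, complexMulMatrix, mulVec, dotProduct, Fin.sum_univ_two, sub_eq_add_neg,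
      add_comm]

lemma integral_planeToComplex_pow_eq_zero {U : Measure (Fin 2 → ℝ)}
    (hUrot : ∀ O : Matrix (Fin 2) (Fin 2) ℝ, O * Oᵀ = 1 → U.map (fun x => O *ᵥ x) = U) {k : ℕ}
    (hk : k ≠ 0) : ∫ y, planeToComplex y ^ k ∂U = 0 := by
  obtain ⟨ζ, hζ⟩ := IsAlgClosed.exists_pow_nat_eq (-1 : ℂ) (Nat.pos_of_ne_zero hk)
  have norm_ζ : ‖ζ‖ = 1 := by
    rw [← pow_eq_one_iff_of_nonneg (norm_nonneg ζ) hk, ← norm_pow, hζ, norm_neg, norm_one]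
  have eq_neg : ∫ y, planeToComplex y ^ k ∂U = -∫ y, planeToComplex y ^ k ∂U := by
    conv_lhs => rw [← hUrot _ (complexMulMatrix_mul_transpose norm_ζ)]
    rw [integral_map (by fun_prop) (by fun_prop)]
    simp_rw [planeToComplex_complexMulMatrix_mulVec, mul_pow, hζ, neg_one_mul]
    exact integral_neg _
  exact self_eq_neg.1 eq_neg

end RotationInvariance

/-- Corollary 5.1(i), case `p = 2`.
Under uniformity on `S¹`, each of `T_+^{(n)} = √n(2λ̂_{n1}-1)`, `T_-^{(n)} = -√n(2λ̂_{n2}-1)`,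
and `T_±^{(n)} = √n max(|2λ̂_{n1}-1|, |2λ̂_{n2}-1|)` converges in distribution to the law with
cdf `ℓ ↦ (1 - exp(-ℓ²)) 1[ℓ > 0]` (the cdf is continuous, so cdf convergence holds at every
point). -/
theorem circle_extreme_eigenvalue_statistics_null_limit
    (U : Measure (Fin 2 → ℝ)) [IsProbabilityMeasure U]
    (hUsphere : U {x : Fin 2 → ℝ | ∑ a, x a ^ 2 = 1}ᶜ = 0)
    (hUrot : ∀ O : Matrix (Fin 2) (Fin 2) ℝ, O * Oᵀ = 1 →
      Measure.map (fun x => O.mulVec x) U = U) :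
    (∀ ℓ : ℝ,
      Tendsto (fun n => ((Measure.pi (fun _ : Fin n => U))
          {x | Real.sqrt n * (2 * maxEig (Sn 2 n x) - 1) ≤ ℓ}).toReal) atTop
        (𝓝 (if 0 < ℓ then 1 - Real.exp (-ℓ ^ 2) else 0))) ∧
    (∀ ℓ : ℝ,
      Tendsto (fun n => ((Measure.pi (fun _ : Fin n => U))
          {x | -(Real.sqrt n * (2 * minEig (Sn 2 n x) - 1)) ≤ ℓ}).toReal) atTop
        (𝓝 (if 0 < ℓ then 1 - Real.exp (-ℓ ^ 2) else 0))) ∧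
    (∀ ℓ : ℝ,
      Tendsto (fun n => ((Measure.pi (fun _ : Fin n => U))
          {x | Real.sqrt n * max |2 * maxEig (Sn 2 n x) - 1| |2 * minEig (Sn 2 n x) - 1| ≤ ℓ}).toReal)
        atTop (𝓝 (if 0 < ℓ then 1 - Real.exp (-ℓ ^ 2) else 0))) := by
  exact circle_extreme_eigenvalue_statistics_null_limit_general U hUsphere
    (integral_planeToComplex_pow_eq_zero hUrot two_ne_zero)
    (integral_planeToComplex_pow_eq_zero hUrot four_ne_zero)

end
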